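/- For every integer p ≥ 4: (1) for every r ≥ 0 the family 𝓕(H(p,p−1,r)) is feasible; (2) for every r ≥ 1 the family 𝓕(H(p,1,r)) is feasible, while 𝓕(H(p,1,0)) (the family of graphs with no induced K_p ∖ K_2) is not feasible. -/

import Mathlib

open SimpleGraph

/-- `(n, m)` is a feasible pair for a family `F` of finite simple graphs
(given, for each number of vertices `n`, as a predicate on simple graphs on `Fin n`):
some member of the family has exactly `n` vertices and exactly `m` edges. -/
def FeasiblePair (F : ∀ n : ℕ, SimpleGraph (Fin n) → Prop) (n m : ℕ) : Prop :=
  ∃ G : SimpleGraph (Fin n), F n G ∧ G.edgeSet.ncard = m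

/-- A family of finite simple graphs is feasible if every pair `(n, m)` with
`n ≥ 1` and `0 ≤ m ≤ n(n-1)/2` is feasible for it. -/
def Feasible (F : ∀ n : ℕ, SimpleGraph (Fin n) → Prop) : Prop :=
  ∀ n m : ℕ, 1 ≤ n → m ≤ n * (n - 1) / 2 → FeasiblePair F n m

/-- `G` is contained in `H` as an induced subgraph: there is an injective map of the
vertices of `G` into the vertices of `H` under which adjacency in `H` holds
if and only if it holds in `G`. -/
def IndContains {α β : Type*} (G : SimpleGraph α) (H : SimpleGraph β) : Prop :=
  ∃ f : α ↪ β, ∀ a b : α, H.Adj (f a) (f b) ↔ G.Adj a b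

/-- The family `𝓕(G)` of all induced `G`-free finite simple graphs. -/
def IndFreeFamily {α : Type*} (G : SimpleGraph α) :
    ∀ n : ℕ, SimpleGraph (Fin n) → Prop :=
  fun _ H => ¬ IndContains G H

/-- The graph `H(p,q,r) = (K_p ∖ K_{1,q}) ∪ rK_1`: the complete graph on the `p`
left-hand vertices, from which the `q` edges joining the vertex `0` to the vertices
`1, …, q` have been removed, together with `r` isolated right-hand vertices. -/
def Hgraph (p q r : ℕ) : SimpleGraph (Fin p ⊕ Fin r) :=
  SimpleGraph.fromRel (fun a b =>
    ∃ i j : Fin p, a = Sum.inl i ∧ b = Sum.inl j ∧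
      ¬ ((i.val = 0 ∧ 1 ≤ j.val ∧ j.val ≤ q) ∨ (j.val = 0 ∧ 1 ≤ i.val ∧ i.val ≤ q)))

/-! A graph is called quasi-complete here when it consists of a clique, one further vertex joined
to part of the clique, and isolated vertices. Filling up the clique one edge at a time shows that
every number of edges is attained by such a graph, hence also by the complement of one. In a
quasi-complete graph the neighbours of a vertex contain no three pairwise non-adjacent vertices, so
its complement has no induced `K₃ ∪ K₁`. Hence `𝓕(G)` is feasible as soon as `G` contains an
induced `K₃ ∪ K₁`, which `H(p,q,r)` does for `p ≥ 4` if `q ≥ 3` or `r ≥ 1`. On the other hand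
`K_p ∖ K_2` is the only graph with `p` vertices and `p(p-1)/2 - 1` edges, so excluding it leaves
that pair unattained. -/

section EdgeCount

variable {V : Type*}

theorem ncard_edgeSet_top [Finite V] :
    (⊤ : SimpleGraph V).edgeSet.ncard = (Nat.card V).choose 2 := by
  classical
  have := Fintype.ofFinite V
  rw [← coe_edgeFinset, Set.ncard_coe_finset, card_edgeFinset_top_eq_card_choose_two,
    Nat.card_eq_fintype_card]

theorem ncard_edgeSet_spanningCoe_top (s : Finset V) :
    (⊤ : SimpleGraph (s : Set V)).spanningCoe.edgeSet.ncard = s.card.choose 2 := by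
  rw [edgeSet_map, Set.ncard_image_of_injective _ (Function.Embedding.injective _),
    ncard_edgeSet_top, Nat.card_coe_set_eq, Set.ncard_coe_finset]

theorem ncard_edgeSet_add_ncard_edgeSet_compl [Finite V] (G : SimpleGraph V) :
    G.edgeSet.ncard + Gᶜ.edgeSet.ncard = (Nat.card V).choose 2 := by
  rw [← Set.ncard_union_eq (disjoint_edgeSet.2 disjoint_compl_right), ← edgeSet_sup,
    sup_compl_eq_top, ncard_edgeSet_top]

theorem exists_between_ncard_edgeSet_eq {G₁ G₂ : SimpleGraph V} {m : ℕ} (hle : G₁ ≤ G₂)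
    (h₁ : G₁.edgeSet.ncard ≤ m) (h₂ : m ≤ G₂.edgeSet.ncard) :
    ∃ G, G₁ ≤ G ∧ G ≤ G₂ ∧ G.edgeSet.ncard = m := by
  obtain ⟨E, hE₁, hE₂, hE⟩ := Set.exists_subsuperset_card_eq (edgeSet_mono hle) h₁ h₂
  have hedge : (fromEdgeSet E).edgeSet = E := by
    rw [edgeSet_fromEdgeSet, sdiff_eq_left]
    exact Set.disjoint_left.2 fun e he => G₂.not_isDiag_of_mem_edgeSet (hE₂ he)
  refine ⟨fromEdgeSet E, ?_, ?_, by rw [hedge, hE]⟩ <;> rwa [← edgeSet_subset_edgeSet, hedge]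

end EdgeCount

section QuasiComplete

variable {V : Type*} {G : SimpleGraph V}

/-- A quasi-complete graph: a clique on `s`, a vertex `v` joined to some vertices of `s`, and
isolated vertices. The case `v ∈ s` is allowed and gives a clique with isolated vertices. -/
def IsQuasiComplete (G : SimpleGraph V) : Prop :=
  ∃ (s : Set V) (v : V), G.IsClique s ∧ G.support ⊆ insert v s

theorem spanningCoe_top_mono {s t : Set V} (h : s ⊆ t) :
    (⊤ : SimpleGraph s).spanningCoe ≤ (⊤ : SimpleGraph t).spanningCoe := by
  rintro _ _ ⟨hne, a, b, -, rfl, rfl⟩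
  exact ⟨hne, ⟨a, h a.2⟩, ⟨b, h b.2⟩, fun hab => hne (Subtype.mk.inj hab), rfl, rfl⟩

theorem isQuasiComplete_of_spanningCoe_le {s : Set V} {v : V}
    (hle : (⊤ : SimpleGraph s).spanningCoe ≤ G)
    (hge : G ≤ (⊤ : SimpleGraph (insert v s : Set V)).spanningCoe) : IsQuasiComplete G := by
  refine ⟨s, v, fun a ha b hb hab => hle ?_, (support_mono hge).trans ?_⟩
  · simpa [ha, hb] using hab
  · rw [support_spanningCoe]
    exact Subtype.coe_image_subset _ _

theorem exists_choose_card_le_le_choose_card_insert [Finite V] [DecidableEq V] [Nonempty V] {m : ℕ}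
    (hm : m ≤ (Nat.card V).choose 2) :
    ∃ (s : Finset V) (v : V), s.card.choose 2 ≤ m ∧ m ≤ (insert v s).card.choose 2 := by
  have := Fintype.ofFinite V
  suffices h : ∀ t : Finset V, m ≤ t.card.choose 2 →
      ∃ (s : Finset V) (v : V), s.card.choose 2 ≤ m ∧ m ≤ (insert v s).card.choose 2 from
    h Finset.univ (by rwa [Finset.card_univ, ← Nat.card_eq_fintype_card])
  intro t
  induction t using Finset.induction with
  | empty => exact fun h => ⟨∅, Classical.arbitrary V, Nat.zero_le _, h.trans (Nat.zero_le _)⟩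
  | insert v s _ ih =>
    intro h
    rcases le_total (s.card.choose 2) m with hs | hs
    exacts [⟨s, v, hs, h⟩, ih hs]

theorem exists_isQuasiComplete_ncard_edgeSet_eq [Finite V] [Nonempty V] {m : ℕ}
    (hm : m ≤ (Nat.card V).choose 2) :
    ∃ G : SimpleGraph V, IsQuasiComplete G ∧ G.edgeSet.ncard = m := by
  classical
  obtain ⟨s, v, hs, hv⟩ := exists_choose_card_le_le_choose_card_insert hm
  rw [← ncard_edgeSet_spanningCoe_top] at hs hv
  rw [Finset.coe_insert] at hv
  obtain ⟨G, hsG, hGv, hG⟩ :=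
    exists_between_ncard_edgeSet_eq (spanningCoe_top_mono (Set.subset_insert v _)) hs hv
  exact ⟨G, isQuasiComplete_of_spanningCoe_le hsG hGv, hG⟩

/-- Among three vertices of `insert v s`, two are distinct from `v`, hence lie in the clique. -/
theorem IsQuasiComplete.not_triangle_sum_vertex_isIndContained_compl (hG : IsQuasiComplete G) :
    ¬ completeGraph (Fin 3) ⊕g completeGraph (Fin 1) ⊴ Gᶜ := by
  rintro ⟨f⟩
  obtain ⟨s, v, hs, hv⟩ := hG
  have hmem (i : Fin 3) : f (.inl i) = v ∨ f (.inl i) ∈ s := by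
    have hnadj : ¬ Gᶜ.Adj (f (.inl i)) (f (.inr 0)) := by simp [f.map_adj_iff]
    have hadj : G.Adj (f (.inl i)) (f (.inr 0)) := by
      by_contra h
      exact hnadj ⟨f.injective.ne (by simp), h⟩
    exact hv hadj.mem_support_left
  obtain ⟨i, j, hij, heq⟩ :=
    Fintype.exists_ne_map_eq_of_card_lt (fun i => (f (.inl i) = v : Prop)) (by simp)
  have hne : f (.inl i) ≠ f (.inl j) := f.injective.ne (by simpa using hij)
  have hadj : Gᶜ.Adj (f (.inl i)) (f (.inl j)) := by simpa [f.map_adj_iff] using hij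
  have hi : f (.inl i) ∈ s :=
    (hmem i).resolve_left fun h => hne (h.trans (heq.mp h).symm)
  have hj : f (.inl j) ∈ s :=
    (hmem j).resolve_left fun h => hne ((heq.mpr h).trans h.symm)
  exact hadj.2 (hs hi hj hne)

end QuasiComplete

section Feasibility

variable {α : Type*} {G : SimpleGraph α}

theorem indContains_iff_isIndContained {β : Type*} {H : SimpleGraph β} :
    IndContains G H ↔ G ⊴ H :=
  ⟨fun ⟨f, hf⟩ => ⟨⟨f, hf _ _⟩⟩, fun ⟨f⟩ => ⟨f.toEmbedding, fun _ _ => f.map_adj_iff⟩⟩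

theorem sum_vertex_isIndContained {β : Type*} {H : SimpleGraph β} (f : G ↪g H) {c : β}
    (hne : ∀ a, f a ≠ c) (hadj : ∀ a, ¬ H.Adj (f a) c) : G ⊕g completeGraph (Fin 1) ⊴ H := by
  refine ⟨⟨⟨Sum.elim f fun _ => c, ?_⟩, ?_⟩⟩
  · exact f.injective.sumElim (Function.injective_of_subsingleton _) fun a _ => hne a
  · rintro (a | i) (b | j)
    · simp [f.map_adj_iff]
    · simp [hadj]
    · simpa using fun h => hadj b h.symm
    · simp [Subsingleton.elim i j]

theorem feasible_indFreeFamily_of_triangle_sum_vertex_isIndContained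
    (h : completeGraph (Fin 3) ⊕g completeGraph (Fin 1) ⊴ G) : Feasible (IndFreeFamily G) := by
  intro n m hn hm
  have : Nonempty (Fin n) := ⟨⟨0, hn⟩⟩
  rw [← Nat.choose_two_right, ← Nat.card_fin n] at hm
  obtain ⟨H, hH, hcard⟩ := exists_isQuasiComplete_ncard_edgeSet_eq (V := Fin n) (Nat.sub_le _ m)
  have hcompl := ncard_edgeSet_add_ncard_edgeSet_compl H
  refine ⟨Hᶜ, fun hGH => ?_, by omega⟩
  exact hH.not_triangle_sum_vertex_isIndContained_compl
    (h.trans (indContains_iff_isIndContained.1 hGH))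

theorem not_feasible_indFreeFamily_of_forall_isIndContained {n m : ℕ} (hn : 1 ≤ n)
    (hm : m ≤ n * (n - 1) / 2)
    (h : ∀ H : SimpleGraph (Fin n), H.edgeSet.ncard = m → G ⊴ H) :
    ¬ Feasible (IndFreeFamily G) := by
  intro hF
  obtain ⟨H, hGH, hcard⟩ := hF n m hn hm
  exact hGH (indContains_iff_isIndContained.2 (h H hcard))

end Feasibility

section OneEdge

variable {V W : Type*}

theorem exists_eq_edge_of_ncard_edgeSet_eq_one {G : SimpleGraph V} (hG : G.edgeSet.ncard = 1) :
    ∃ a b, a ≠ b ∧ G = edge a b := by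
  obtain ⟨e, he⟩ := Set.ncard_eq_one.1 hG
  induction e with
  | _ a b =>
    have hab : a ≠ b := G.ne_of_adj (by simp [← mem_edgeSet, he])
    exact ⟨a, b, hab, edgeSet_injective (by rw [he, edgeSet_edge_of_ne hab])⟩

theorem exists_embedding_apply_eq_apply_eq (e : V ↪ W) {a b : V} {c d : W} (hab : a ≠ b)
    (hcd : c ≠ d) : ∃ σ : V ↪ W, σ a = c ∧ σ b = d := by
  obtain ⟨τ, hc, hd⟩ := MulAction.is_two_pretransitive_iff.1
    (Equiv.Perm.isMultiplyPretransitive W 2) (e.injective.ne hab) hcd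
  exact ⟨e.trans τ.toEmbedding, hc, hd⟩

theorem edge_isIndContained_edge (e : V ↪ W) {a b : V} {c d : W} (hab : a ≠ b) (hcd : c ≠ d) :
    edge a b ⊴ edge c d := by
  obtain ⟨σ, rfl, rfl⟩ := exists_embedding_apply_eq_apply_eq e hab hcd
  exact ⟨⟨σ, by simp [edge_adj]⟩⟩

end OneEdge

section Hgraph

variable {p q r : ℕ}

theorem Hgraph_adj_inl_inl {i j : Fin p} :
    (Hgraph p q r).Adj (.inl i) (.inl j) ↔
      i ≠ j ∧ ¬ ((i.val = 0 ∧ 1 ≤ j.val ∧ j.val ≤ q) ∨ (j.val = 0 ∧ 1 ≤ i.val ∧ i.val ≤ q)) := by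
  simp only [Hgraph, fromRel_adj]
  grind

theorem not_Hgraph_adj_inr {i : Fin r} {x : Fin p ⊕ Fin r} :
    ¬ (Hgraph p q r).Adj x (.inr i) := by
  simp [Hgraph]

/-- The triangle has vertices `1, 2, 3`. The isolated vertex is `0` if `q ≥ 3`, and one of the
`r` additional vertices otherwise. -/
theorem triangle_sum_vertex_isIndContained_Hgraph (hp : 4 ≤ p) (h : 3 ≤ q ∨ 1 ≤ r) :
    completeGraph (Fin 3) ⊕g completeGraph (Fin 1) ⊴ Hgraph p q r := by
  let t (i : Fin 3) : Fin p ⊕ Fin r := .inl ⟨i + 1, by omega⟩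
  have ht : Function.Injective t := fun i j => by simp [t, Fin.ext_iff]
  have hadj (i j : Fin 3) : (Hgraph p q r).Adj (t i) (t j) ↔ (completeGraph (Fin 3)).Adj i j := by
    simp only [t, Hgraph_adj_inl_inl, completeGraph_eq_top, top_adj, ne_eq, Fin.ext_iff]
    omega
  let f : completeGraph (Fin 3) ↪g Hgraph p q r := ⟨⟨t, ht⟩, hadj _ _⟩
  rcases h with hq | hr
  · refine sum_vertex_isIndContained f (c := .inl ⟨0, by omega⟩) (fun i => ?_) fun i hi => ?_
    · change t i ≠ _
      simp [t]
    · exact (Hgraph_adj_inl_inl.1 hi).2 (.inr ⟨rfl, Nat.le_add_left 1 i, i.isLt.trans_le hq⟩)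
  · exact sum_vertex_isIndContained f (c := .inr ⟨0, hr⟩) (fun _ => Sum.inl_ne_inr)
      fun _ => not_Hgraph_adj_inr

theorem compl_Hgraph_one_zero :
    (Hgraph (p + 2) 1 0)ᶜ = edge (.inl 0) (.inl 1) := by
  ext (i | i) (j | j)
  · rw [compl_adj, Hgraph_adj_inl_inl, edge_adj]
    simp only [ne_eq, Fin.ext_iff, Sum.inl.injEq, Fin.val_zero, Fin.val_one]
    omega
  all_goals exact Fin.elim0 ‹_›

theorem feasible_indFreeFamily_Hgraph (hp : 4 ≤ p) (h : 3 ≤ q ∨ 1 ≤ r) :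
    Feasible (IndFreeFamily (Hgraph p q r)) :=
  feasible_indFreeFamily_of_triangle_sum_vertex_isIndContained
    (triangle_sum_vertex_isIndContained_Hgraph hp h)

theorem not_feasible_indFreeFamily_Hgraph_one_zero (hp : 2 ≤ p) :
    ¬ Feasible (IndFreeFamily (Hgraph p 1 0)) := by
  obtain ⟨k, rfl⟩ := Nat.exists_eq_add_of_le' hp
  have hpos : 0 < (k + 2).choose 2 := Nat.choose_pos hp
  refine not_feasible_indFreeFamily_of_forall_isIndContained (n := k + 2) (by omega)
    (m := (k + 2).choose 2 - 1) ((Nat.sub_le _ _).trans (Nat.choose_two_right _).le) fun G hG => ?_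
  have hcard := ncard_edgeSet_add_ncard_edgeSet_compl G
  rw [Nat.card_fin] at hcard
  obtain ⟨a, b, hab, hGab⟩ := exists_eq_edge_of_ncard_edgeSet_eq_one (G := Gᶜ) (by omega)
  rw [← compl_isIndContained_compl, compl_Hgraph_one_zero, hGab]
  exact edge_isIndContained_edge (Equiv.sumEmpty _ _).toEmbedding (by simp) hab

end Hgraph

theorem feasible_indFreeFamily_Hgraph_extremes_general (p : ℕ) :
    (∀ q r : ℕ, 4 ≤ p → 3 ≤ q ∨ 1 ≤ r → Feasible (IndFreeFamily (Hgraph p q r))) ∧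
    (2 ≤ p → ¬ Feasible (IndFreeFamily (Hgraph p 1 0))) :=
  ⟨fun _ _ => feasible_indFreeFamily_Hgraph, not_feasible_indFreeFamily_Hgraph_one_zero⟩

/-- For every `p ≥ 4`: the family `𝓕(H(p,p-1,r))` is feasible for every `r ≥ 0`;
the family `𝓕(H(p,1,r))` is feasible for every `r ≥ 1`; and `𝓕(H(p,1,0))`
(the family of graphs with no induced `K_p ∖ K_2`) is not feasible. -/
theorem feasible_indFreeFamily_Hgraph_extremes (p : ℕ) (hp : 4 ≤ p) :
    (∀ r : ℕ, Feasible (IndFreeFamily (Hgraph p (p - 1) r))) ∧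
    (∀ r : ℕ, 1 ≤ r → Feasible (IndFreeFamily (Hgraph p 1 r))) ∧
    ¬ Feasible (IndFreeFamily (Hgraph p 1 0)) := by
  obtain ⟨hfeasible, hinfeasible⟩ := feasible_indFreeFamily_Hgraph_extremes_general p
  exact ⟨fun r => hfeasible _ r hp (.inl (by omega)), fun r hr => hfeasible _ r hp (.inr hr),
    hinfeasible (by omega)⟩
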